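/- arXiv:2508.13809 — 2 statements merged into one kernel-verified Lean document; each statement's English description precedes it below -/
import Mathlib

section
/- Let p be a prime, k > 2 an integer, and L ⊆ Z/pZ with 0 ∉ L and L = −L (i.e., x ∈ L iff −x ∈ L). Suppose p divides n. Let A_1, …, A_m be pairwise distinct subsets of [n] with m ≥ k such that: for every j with 1 ≤ j ≤ k−1 and all indices 1 ≤ r_1 < ⋯ < r_j ≤ m, |A_{r_1} ∩ ⋯ ∩ A_{r_j}| ≡ 0 (mod p); and for all indices 1 ≤ r_1 < ⋯ < r_k ≤ m, |A_{r_1} ∩ ⋯ ∩ A_{r_k}| mod p ∈ L. Then m ≤ ∑_{i=0}^{|L|} C(⌊n/2^{k−2}⌋ − 2, i) + (k − 2), where C(a,b) denotes the binomial coefficient and ⌊·⌋ denotes the floor (with the convention that a − 2 is truncated natural subtraction when a < 2). -/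
/-!
Fix a member `A a` of the family. Restricting the ground set to `A a` lowers the order `k` of the
intersection conditions by one, and so does restricting it to the complement of `A a`, because there
the intersections change only by a sign modulo `p` and `L = -L`. Choosing the smaller of the two
parts halves the ground set, so after `k - 2` steps only pairwise conditions remain.

In the pairwise case all the sets may be assumed to avoid a common point `a`: complementing a set
again changes intersections by a sign at most. Since each indicator vector `w j` sums to zero modulo
`p`, a second coordinate can be eliminated as well. As `⟪w i, w j⟫` lies in `L` exactly when
`i ≠ j`, the functions `∏ l ∈ L, (⟪w j, ·⟫ - l)` are linearly independent on the vectors `w i`, and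
they are polynomials of degree at most `|L|` in the remaining idempotent coordinates, two fewer than
there are points.
-/

open Finset

section LowDegreeSpan

variable {K R α : Type*} [CommRing K] [CommRing R] [Algebra K R] {w : α → R} {T : Finset α} {d : ℕ}

variable (K) in
/-- The span of the squarefree monomials of degree at most `d` in the elements `w x`, `x ∈ T`, of an
algebra. When the `w x` are idempotent, this contains every polynomial of degree at most `d`
in them. -/
def lowDegreeSpan (w : α → R) (T : Finset α) (d : ℕ) : Submodule K R :=
  Submodule.span K ((fun S : Finset α => ∏ x ∈ S, w x) '' {S | S ⊆ T ∧ #S ≤ d})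

lemma lowDegreeSpan_mono {e : ℕ} (h : d ≤ e) : lowDegreeSpan K w T d ≤ lowDegreeSpan K w T e :=
  Submodule.span_mono (Set.image_mono fun _ hS => ⟨hS.1, hS.2.trans h⟩)

lemma finrank_lowDegreeSpan_le [StrongRankCondition K] (w : α → R) (T : Finset α) (d : ℕ) :
    Module.finrank K (lowDegreeSpan K w T d) ≤ ∑ i ∈ range (d + 1), (#T).choose i := by
  classical
  let U : Finset (Finset α) := (range (d + 1)).biUnion fun i => T.powersetCard i
  have hU : {S | S ⊆ T ∧ #S ≤ d} = (U : Set (Finset α)) := by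
    ext S
    simp [U, mem_powersetCard, and_comm]
  rw [lowDegreeSpan, hU, ← coe_image]
  calc _ ≤ #(U.image fun S => ∏ x ∈ S, w x) := finrank_span_finset_le_card _
    _ ≤ #U := card_image_le
    _ ≤ ∑ i ∈ range (d + 1), #(T.powersetCard i) := card_biUnion_le
    _ = ∑ i ∈ range (d + 1), (#T).choose i := by simp only [card_powersetCard]

lemma mul_prod_of_isIdempotentElem [DecidableEq α] {x : α} (hx : IsIdempotentElem (w x))
    (S : Finset α) : w x * ∏ y ∈ S, w y = ∏ y ∈ insert x S, w y := by
  by_cases hxS : x ∈ S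
  · rw [insert_eq_of_mem hxS, ← mul_prod_erase _ _ hxS, ← mul_assoc, hx.eq]
  · exact (prod_insert hxS).symm

lemma mul_mem_lowDegreeSpan {x : α} (hw : IsIdempotentElem (w x)) (hx : x ∈ T) {g : R}
    (hg : g ∈ lowDegreeSpan K w T d) : w x * g ∈ lowDegreeSpan K w T (d + 1) := by
  classical
  induction hg using Submodule.span_induction with
  | mem g hg =>
    obtain ⟨S, ⟨hST, hS⟩, rfl⟩ := hg
    rw [mul_prod_of_isIdempotentElem hw]
    exact Submodule.subset_span
      ⟨insert x S, ⟨insert_subset hx hST, (card_insert_le x S).trans (by lia)⟩, rfl⟩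
  | zero => simp only [mul_zero, zero_mem]
  | add g h _ _ hg hh => simpa only [mul_add] using add_mem hg hh
  | smul c g _ hg => simpa only [mul_smul_comm] using Submodule.smul_mem _ c hg

lemma prod_affine_mem_lowDegreeSpan (hw : ∀ x ∈ T, IsIdempotentElem (w x)) (c : α → K)
    (L : Finset K) :
    ∏ l ∈ L, (∑ x ∈ T, c x • w x - algebraMap K R l) ∈ lowDegreeSpan K w T #L := by
  classical
  induction L using Finset.induction_on with
  | empty => exact Submodule.subset_span ⟨∅, by simp, by simp⟩
  | insert l L hl ih =>
    rw [prod_insert hl, card_insert_of_notMem hl, sub_mul, sum_mul, ← Algebra.smul_def]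
    refine sub_mem (sum_mem fun x hx => ?_)
      (Submodule.smul_mem _ l (lowDegreeSpan_mono (Nat.le_succ _) ih))
    rw [smul_mul_assoc]
    exact Submodule.smul_mem _ _ (mul_mem_lowDegreeSpan (hw x hx) hx ih)

end LowDegreeSpan

section ComplementAt

variable {R α : Type*} [CommRing R]

/-- For a `0`-`1` vector `v`, this is `v` if `v a = 0` and `1 - v` if `v a = 1`: among the indicator
vectors of a set and of its complement, the one vanishing at `a`. -/
def complementAt (a : α) (v : α → R) : α → R :=
  fun x => (1 - 2 * v a) * (v x - v a)

lemma complementAt_self (a : α) (v : α → R) : complementAt a v a = 0 := by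
  rw [complementAt, sub_self, mul_zero]

lemma isIdempotentElem_complementAt {v : α → R} (hv : ∀ x, IsIdempotentElem (v x)) (a x : α) :
    IsIdempotentElem (complementAt a v x) := by
  have sign_sq : (1 - 2 * v a) ^ 2 = 1 := by linear_combination 4 * (hv a).eq
  rw [complementAt, IsIdempotentElem]
  linear_combination (v x - v a) ^ 2 * sign_sq + (hv x).eq - (hv a).eq

lemma sum_complementAt {X : Finset α} (hX : (#X : R) = 0) (a : α) {v : α → R}
    (hv : ∑ x ∈ X, v x = 0) : ∑ x ∈ X, complementAt a v x = 0 := by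
  simp only [complementAt, ← mul_sum, sum_sub_distrib, sum_const, nsmul_eq_mul, hv, hX]
  ring

lemma sum_complementAt_mul_complementAt {X : Finset α} (hX : (#X : R) = 0) (a : α) {u v : α → R}
    (hu : ∑ x ∈ X, u x = 0) (hv : ∑ x ∈ X, v x = 0) :
    ∑ x ∈ X, complementAt a u x * complementAt a v x =
      (1 - 2 * u a) * ((1 - 2 * v a) * ∑ x ∈ X, u x * v x) := by
  have translate : ∑ x ∈ X, (u x - u a) * (v x - v a) = ∑ x ∈ X, u x * v x := by
    simp only [sub_mul, mul_sub, sum_sub_distrib, ← mul_sum, ← sum_mul, sum_const, nsmul_eq_mul,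
      hu, hv, hX]
    ring
  simp only [complementAt, ← translate, mul_sum]
  exact sum_congr rfl fun x _ => by ring

lemma one_sub_two_mul_mul_mem [NoZeroDivisors R] {L : Finset R} (hsym : ∀ x ∈ L, -x ∈ L) {e y : R}
    (he : IsIdempotentElem e) (hy : y ∈ L) : (1 - 2 * e) * y ∈ L := by
  rcases IsIdempotentElem.iff_eq_zero_or_one.1 he with rfl | rfl
  · simpa only [mul_zero, sub_zero, one_mul] using hy
  · convert hsym y hy using 1
    ring

end ComplementAt

lemma linearIndependent_of_diagonal {R ι : Type*} [Ring R] [IsDomain R] {f : ι → ι → R}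
    (hdiag : ∀ i, f i i ≠ 0) (hoff : ∀ i j, i ≠ j → f i j = 0) : LinearIndependent R f := by
  classical
  have hf : f = fun i => Pi.single i (f i i) := by
    ext i j
    obtain rfl | hij := eq_or_ne i j
    · rw [Pi.single_eq_same]
    · rw [hoff i j hij, Pi.single_eq_of_ne' hij]
  rw [hf]
  exact Pi.linearIndependent_single_of_ne_zero hdiag

lemma one_le_sum_range_choose (n d : ℕ) : 1 ≤ ∑ i ∈ range (d + 1), n.choose i := by
  simp [sum_range_succ']

section Vectors

variable {F ι α : Type*} [Field F]

lemma card_le_of_affine_forms [Fintype ι] {w c : ι → α → F}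
    (hw : ∀ i x, IsIdempotentElem (w i x)) {T : Finset α} {L : Finset F}
    (hdiag : ∀ i, ∑ x ∈ T, c i x * w i x ∉ L)
    (hoff : ∀ i j, i ≠ j → ∑ x ∈ T, c i x * w j x ∈ L) :
    Fintype.card ι ≤ ∑ i ∈ range (#L + 1), (#T).choose i := by
  let coord : α → ι → F := fun x i => w i x
  have hcoord (x) : IsIdempotentElem (coord x) := funext fun i => hw i x
  let f : ι → ι → F := fun i => ∏ l ∈ L, (∑ x ∈ T, c i x • coord x - algebraMap F (ι → F) l)
  have hf_apply (i j) : f i j = ∏ l ∈ L, (∑ x ∈ T, c i x * w j x - l) := by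
    simp [f, coord, Finset.prod_apply, Finset.sum_apply]
  have hf_mem (i) : f i ∈ lowDegreeSpan F coord T #L :=
    prod_affine_mem_lowDegreeSpan (fun x _ => hcoord x) (c i) L
  have hf : LinearIndependent F f := by
    refine linearIndependent_of_diagonal (fun i => ?_) fun i j hij => ?_
    · rw [hf_apply, prod_ne_zero_iff]
      exact fun l hl h => hdiag i (sub_eq_zero.1 h ▸ hl)
    · rw [hf_apply]
      exact prod_eq_zero (hoff i j hij) (sub_self _)
  have hf' : LinearIndependent F fun i => (⟨f i, hf_mem i⟩ : lowDegreeSpan F coord T #L) :=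
    LinearIndependent.of_comp (Submodule.subtype _) hf
  exact hf'.fintype_card_le_finrank.trans (finrank_lowDegreeSpan_le coord T #L)

lemma card_le_of_inner_mem_of_common_zero [Fintype ι] {w : ι → α → F}
    (hw : ∀ i x, IsIdempotentElem (w i x)) {X : Finset α} {a b : α} (ha : a ∈ X) (hb : b ∈ X)
    (hab : a ≠ b) (hwa : ∀ i, w i a = 0) (hsum : ∀ i, ∑ x ∈ X, w i x = 0) {L : Finset F}
    (h0 : (0 : F) ∉ L) (hL : ∀ i j, i ≠ j → ∑ x ∈ X, w i x * w j x ∈ L) :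
    Fintype.card ι ≤ ∑ i ∈ range (#L + 1), (#X - 2).choose i := by
  classical
  have hb' : b ∈ X.erase a := mem_erase.2 ⟨hab.symm, hb⟩
  set T := (X.erase a).erase b with hT
  have hTcard : #T = #X - 2 := by
    rw [hT, card_erase_of_mem hb', card_erase_of_mem ha, Nat.sub_sub]
  have sum_split (u : α → F) : ∑ x ∈ X, u x = u a + (u b + ∑ x ∈ T, u x) := by
    rw [add_sum_erase _ _ hb', add_sum_erase _ _ ha]
  -- The coordinate `b` is eliminated through `w j b = -∑ x ∈ T, w j x`.
  have inner_eq (i j) : ∑ x ∈ T, (w i x - w i b) * w j x = ∑ x ∈ X, w i x * w j x := by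
    have hj := hsum j
    rw [sum_split, hwa, zero_add] at hj
    rw [sum_split, hwa, zero_mul, zero_add]
    simp only [sub_mul, sum_sub_distrib, ← mul_sum]
    linear_combination -w i b * hj
  rw [← hTcard]
  refine card_le_of_affine_forms (c := fun i x => w i x - w i b) hw (fun i => ?_) fun i j hij => ?_
  · simpa only [inner_eq, (hw i _).eq, hsum] using h0
  · simpa only [inner_eq] using hL i j hij

lemma card_le_of_inner_mem [Fintype ι] {v : ι → α → F} (hv : ∀ i x, IsIdempotentElem (v i x))
    {X : Finset α} (hX : (#X : F) = 0) (hsum : ∀ i, ∑ x ∈ X, v i x = 0) {L : Finset F}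
    (h0 : (0 : F) ∉ L) (hsym : ∀ x ∈ L, -x ∈ L)
    (hL : ∀ i j, i ≠ j → ∑ x ∈ X, v i x * v j x ∈ L) :
    Fintype.card ι ≤ ∑ i ∈ range (#L + 1), (#X - 2).choose i := by
  rcases subsingleton_or_nontrivial ι with _ | _
  · exact Fintype.card_le_one_iff_subsingleton.2 ‹_› |>.trans (one_le_sum_range_choose _ _)
  have hX_nonempty : X.Nonempty := by
    obtain ⟨i, j, hij⟩ := exists_pair_ne ι
    rw [nonempty_iff_ne_empty]
    rintro rfl
    exact h0 (by simpa only [sum_empty] using hL i j hij)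
  have hX_ne_one : #X ≠ 1 := fun h => one_ne_zero (by rwa [h, Nat.cast_one] at hX)
  obtain ⟨a, ha, b, hb, hab⟩ : ∃ a ∈ X, ∃ b ∈ X, a ≠ b :=
    one_lt_card.1 (by have := hX_nonempty.card_pos; lia)
  refine card_le_of_inner_mem_of_common_zero (w := fun i => complementAt a (v i))
    (fun i => isIdempotentElem_complementAt (hv i) a) ha hb hab
    (fun i => complementAt_self a (v i)) (fun i => sum_complementAt hX a (hsum i)) h0
    fun i j hij => ?_
  rw [sum_complementAt_mul_complementAt hX a (hsum i) (hsum j)]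
  exact one_sub_two_mul_mul_mem hsym (hv i a) (one_sub_two_mul_mul_mem hsym (hv j a) (hL i j hij))

end Vectors

section CommonPart

variable {ι α : Type*} [DecidableEq α]

/-- The elements of `X` lying in `A i` for every `i ∈ S`. Intersecting with the ground set `X` gives
the empty intersection the value `X`. -/
def commonPart (A : ι → Finset α) (X : Finset α) (S : Finset ι) : Finset α :=
  {x ∈ X | ∀ i ∈ S, x ∈ A i}

lemma commonPart_univ [Fintype α] (A : ι → Finset α) (S : Finset ι) :
    commonPart A univ S = S.inf A := by
  ext x
  simp [commonPart, mem_inf]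

lemma commonPart_empty (A : ι → Finset α) (X : Finset α) : commonPart A X ∅ = X := by
  simp [commonPart]

variable [DecidableEq ι]

lemma commonPart_filter_mem (A : ι → Finset α) (X : Finset α) (a : ι) (S : Finset ι) :
    commonPart A {x ∈ X | x ∈ A a} S = commonPart A X (insert a S) := by
  ext x
  simp [commonPart, and_assoc]

lemma card_commonPart_insert_add_card_commonPart_filter_notMem (A : ι → Finset α) (X : Finset α)
    (a : ι) (S : Finset ι) :
    #(commonPart A X (insert a S)) + #(commonPart A {x ∈ X | x ∉ A a} S) =
      #(commonPart A X S) := by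
  rw [← commonPart_filter_mem]
  simp only [commonPart, filter_comm (s := X) _ (fun x => ∀ i ∈ S, x ∈ A i)]
  exact card_filter_add_card_filter_not (fun x => x ∈ A a)

end CommonPart

/-- The hypotheses of the reverse odd-town theorem of order `k`, relative to a ground set `X`, for
the members of `A` indexed by `I`: intersections of fewer than `k` sets, including the empty
intersection `X`, have size zero in `R`, and intersections of `k` sets have size in `L`. Taking
`R = ZMod p` gives the conditions modulo `p`, with `p ∣ #X`. -/
structure IsReverseOddTown {R ι α : Type*} [AddMonoidWithOne R] [DecidableEq α] (L : Finset R)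
    (k : ℕ) (A : ι → Finset α) (X : Finset α) (I : Finset ι) : Prop where
  card_eq_zero : ∀ S ⊆ I, #S < k → (#(commonPart A X S) : R) = 0
  card_mem : ∀ S ⊆ I, #S = k → (#(commonPart A X S) : R) ∈ L

namespace IsReverseOddTown

variable {ι α : Type*} [DecidableEq α] {A : ι → Finset α} {X : Finset α} {I : Finset ι} {k : ℕ}

section Restriction

variable {R : Type*} [DecidableEq ι] {a : ι}

lemma filter_mem [AddMonoidWithOne R] {L : Finset R} (h : IsReverseOddTown L (k + 1) A X I)
    (ha : a ∈ I) : IsReverseOddTown L k A {x ∈ X | x ∈ A a} (I.erase a) where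
  card_eq_zero S hS hSk := by
    obtain ⟨hSI, haS⟩ := subset_erase.1 hS
    rw [commonPart_filter_mem]
    exact h.card_eq_zero _ (insert_subset ha hSI) (by rw [card_insert_of_notMem haS]; lia)
  card_mem S hS hSk := by
    obtain ⟨hSI, haS⟩ := subset_erase.1 hS
    rw [commonPart_filter_mem]
    exact h.card_mem _ (insert_subset ha hSI) (by rw [card_insert_of_notMem haS, hSk])

variable [AddGroupWithOne R] {L : Finset R}

lemma filter_notMem (hsym : ∀ x ∈ L, -x ∈ L) (h : IsReverseOddTown L (k + 1) A X I)
    (ha : a ∈ I) : IsReverseOddTown L k A {x ∈ X | x ∉ A a} (I.erase a) := by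
  have card_eq_neg : ∀ S ⊆ I.erase a, #S ≤ k →
      (#(commonPart A {x ∈ X | x ∉ A a} S) : R) =
        -(#(commonPart A {x ∈ X | x ∈ A a} S) : R) := fun S hS hSk => by
    have hzero := h.card_eq_zero S (hS.trans (erase_subset _ _)) (by lia)
    rw [← card_commonPart_insert_add_card_commonPart_filter_notMem A X a S, Nat.cast_add] at hzero
    rw [commonPart_filter_mem]
    exact eq_neg_of_add_eq_zero_right hzero
  refine ⟨fun S hS hSk => ?_, fun S hS hSk => ?_⟩
  · rw [card_eq_neg S hS hSk.le, (h.filter_mem ha).card_eq_zero S hS hSk, neg_zero]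
  · rw [card_eq_neg S hS hSk.le]
    exact hsym _ ((h.filter_mem ha).card_mem S hS hSk)

lemma exists_card_le_half (hsym : ∀ x ∈ L, -x ∈ L) (h : IsReverseOddTown L (k + 1) A X I)
    (ha : a ∈ I) : ∃ Y : Finset α, #Y ≤ #X / 2 ∧ IsReverseOddTown L k A Y (I.erase a) := by
  have hcard := card_filter_add_card_filter_not (s := X) (fun x => x ∈ A a)
  rcases le_total #{x ∈ X | x ∈ A a} #{x ∈ X | x ∉ A a} with hle | hle
  · exact ⟨_, by lia, h.filter_mem ha⟩
  · exact ⟨_, by lia, h.filter_notMem hsym ha⟩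

end Restriction

variable {F : Type*} [Field F] {L : Finset F}

lemma card_le_of_two (h0 : (0 : F) ∉ L) (hsym : ∀ x ∈ L, -x ∈ L)
    (h : IsReverseOddTown L 2 A X I) : #I ≤ ∑ i ∈ range (#L + 1), (#X - 2).choose i := by
  classical
  let v : I → α → F := fun i x => if x ∈ A i then 1 else 0
  have hv (i x) : IsIdempotentElem (v i x) := by simp [v, IsIdempotentElem]
  have hX : (#X : F) = 0 := by
    simpa only [commonPart_empty] using h.card_eq_zero ∅ (empty_subset I) (by simp)
  have hsum (i : I) : ∑ x ∈ X, v i x = 0 := by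
    simpa [commonPart, v, filter_mem_eq_inter] using h.card_eq_zero {i.1} (by simp) (by simp)
  have hinner (i j : I) (hij : i ≠ j) : ∑ x ∈ X, v i x * v j x ∈ L := by
    have := h.card_mem {i.1, j.1} (by simp [insert_subset_iff])
      (card_pair fun hij' => hij (Subtype.ext hij'))
    simpa [commonPart, v, ← ite_and, and_comm] using this
  rw [← Fintype.card_coe I]
  exact card_le_of_inner_mem hv hX hsum h0 hsym hinner

lemma card_le (h0 : (0 : F) ∉ L) (hsym : ∀ x ∈ L, -x ∈ L) (t : ℕ)
    (h : IsReverseOddTown L (t + 2) A X I) :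
    #I ≤ ∑ i ∈ range (#L + 1), (#X / 2 ^ t - 2).choose i + t := by
  classical
  induction t generalizing X I with
  | zero => simpa only [pow_zero, Nat.div_one, add_zero] using h.card_le_of_two h0 hsym
  | succ t ih =>
    obtain rfl | ⟨a, ha⟩ := I.eq_empty_or_nonempty
    · exact card_empty.trans_le (Nat.zero_le _)
    obtain ⟨Y, hYX, hY⟩ := h.exists_card_le_half hsym ha
    have hdiv : #Y / 2 ^ t ≤ #X / 2 ^ (t + 1) := by
      rw [pow_succ', ← Nat.div_div_eq_div_mul]
      exact Nat.div_le_div_right hYX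
    calc #I = #(I.erase a) + 1 := (card_erase_add_one ha).symm
      _ ≤ ∑ i ∈ range (#L + 1), (#Y / 2 ^ t - 2).choose i + t + 1 := by gcongr; exact ih hY
      _ ≤ ∑ i ∈ range (#L + 1), (#X / 2 ^ (t + 1) - 2).choose i + (t + 1) := by
        rw [add_assoc]
        gcongr

end IsReverseOddTown

lemma inf_orderEmbOfFin {ι β : Type*} [LinearOrder ι] [SemilatticeInf β] [OrderTop β] (A : ι → β)
    {S : Finset ι} {j : ℕ} (hS : #S = j) :
    (univ.inf fun t : Fin j => A (S.orderEmbOfFin hS t)) = S.inf A := by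
  conv_rhs => rw [← map_orderEmbOfFin_univ S hS, inf_map]
  rfl

theorem generalized_reverse_odd_town_dvd_general {F ι α : Type*} [Field F] [LinearOrder ι]
    [Fintype ι] [Fintype α] [DecidableEq α] {k : ℕ} (hk : 2 ≤ k) {L : Finset F}
    (h0 : (0 : F) ∉ L) (hsym : ∀ x ∈ L, -x ∈ L) (hα : (Fintype.card α : F) = 0)
    {A : ι → Finset α}
    (hlow : ∀ j : ℕ, 1 ≤ j → j ≤ k - 1 → ∀ r : Fin j → ι, StrictMono r →
      (#(univ.inf fun t : Fin j => A (r t)) : F) = 0)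
    (htop : ∀ r : Fin k → ι, StrictMono r → (#(univ.inf fun t : Fin k => A (r t)) : F) ∈ L) :
    Fintype.card ι ≤
      ∑ i ∈ range (#L + 1), (Fintype.card α / 2 ^ (k - 2) - 2).choose i + (k - 2) := by
  have h : IsReverseOddTown L (k - 2 + 2) A univ univ := by
    rw [Nat.sub_add_cancel hk]
    refine ⟨fun S _ hS => ?_, fun S _ hS => ?_⟩
    · obtain rfl | hS_nonempty := S.eq_empty_or_nonempty
      · rwa [commonPart_empty]
      · rw [commonPart_univ, ← inf_orderEmbOfFin A rfl]
        exact hlow #S hS_nonempty.card_pos (by lia) _ (S.orderEmbOfFin rfl).strictMono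
    · rw [commonPart_univ, ← inf_orderEmbOfFin A hS]
      exact htop _ (S.orderEmbOfFin hS).strictMono
  exact h.card_le h0 hsym (k - 2)

/-- Generalized reverse odd-town theorem, case p ∣ n. -/
theorem generalized_reverse_odd_town_dvd (p : ℕ) (hp : p.Prime) (k : ℕ) (hk : 2 < k)
    (L : Finset (ZMod p)) (h0 : (0 : ZMod p) ∉ L) (hsym : ∀ x : ZMod p, x ∈ L ↔ -x ∈ L)
    (n : ℕ) (hpn : p ∣ n)
    (m : ℕ) (hm : k ≤ m) (A : Fin m → Finset (Fin n)) (hA : Function.Injective A)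
    (hlow : ∀ j : ℕ, 1 ≤ j → j ≤ k - 1 → ∀ r : Fin j → Fin m, StrictMono r →
      ((Finset.univ.inf fun t : Fin j => A (r t)).card : ZMod p) = 0)
    (htop : ∀ r : Fin k → Fin m, StrictMono r →
      ((Finset.univ.inf fun t : Fin k => A (r t)).card : ZMod p) ∈ L) :
    m ≤ ∑ i ∈ Finset.range (L.card + 1), (n / 2 ^ (k - 2) - 2).choose i + (k - 2) := by
  have : Fact p.Prime := ⟨hp⟩
  simpa using generalized_reverse_odd_town_dvd_general hk.le h0 (fun x => (hsym x).1)
    (by simpa using (ZMod.natCast_eq_zero_iff n p).2 hpn) hlow htop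
end

section
/- Let p be a prime, k > 2 an integer, and L ⊆ Z/pZ with 0 ∉ L and L = −L (i.e., x ∈ L iff −x ∈ L). Suppose p does not divide n. Let A_1, …, A_m be pairwise distinct subsets of [n] with m ≥ k such that: for every j with 1 ≤ j ≤ k−1 and all indices 1 ≤ r_1 < ⋯ < r_j ≤ m, |A_{r_1} ∩ ⋯ ∩ A_{r_j}| ≡ 0 (mod p); and for all indices 1 ≤ r_1 < ⋯ < r_k ≤ m, |A_{r_1} ∩ ⋯ ∩ A_{r_k}| mod p ∈ L. Then m ≤ ∑_{i=0}^{|L|} C(⌊n/2^{k−3}⌋ − 2, i) + (k − 2), where C(a,b) denotes the binomial coefficient and ⌊·⌋ denotes the floor (with the convention that a − 2 is truncated natural subtraction when a < 2). -/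
/-!
Fix a member `A a` of a family whose `j`-wise intersections have size `0` modulo `p` for `j < k`
and size in `L` for `j = k`. Restricting the other members to `A a`, or to its complement, lowers
`k` by one: on the complement the `(k - 1)`-wise intersection sizes lie in `-L = L`, since they and
those on `A a` add up to `0`. Always passing to the smaller part halves the ground set each time,
so after `k - 2` steps at most `n / 2 ^ (k - 2)` points are left, all but `k - 2` members survive,
and the modular Frankl–Wilson bound applies to them.
-/

open Finset

variable {ι α R : Type*}

section SetFunction

/-- The set functions of degree at most `d` in the variables `S`, where the variable `x` stands for
the function `X ↦ [x ∈ X]`. Variables being idempotent, the squarefree monomials span; the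
monomial `∏ x ∈ T, x` is the indicator of `{X | T ⊆ X} = Set.Ici T`. -/
def setFunctionDegreeLE (R : Type*) [Semiring R] (S : Finset α) (d : ℕ) :
    Submodule R (Finset α → R) :=
  Submodule.span R ((fun T ↦ (Set.Ici T).indicator 1) '' {T | T ⊆ S ∧ #T ≤ d})

namespace setFunctionDegreeLE

lemma indicator_mem [Semiring R] {S T : Finset α} {d : ℕ} (hT : T ⊆ S) (hd : #T ≤ d) :
    (Set.Ici T).indicator 1 ∈ setFunctionDegreeLE R S d :=
  Submodule.subset_span ⟨T, ⟨hT, hd⟩, rfl⟩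

lemma mul_mem [CommSemiring R] {S : Finset α} {d e : ℕ} {f g : Finset α → R}
    (hf : f ∈ setFunctionDegreeLE R S d) (hg : g ∈ setFunctionDegreeLE R S e) :
    f * g ∈ setFunctionDegreeLE R S (d + e) := by
  classical
  have hfg := Submodule.mul_mem_mul hf hg
  rw [setFunctionDegreeLE, setFunctionDegreeLE, Submodule.span_mul_span] at hfg
  refine Submodule.span_mono ?_ hfg
  rintro _ ⟨_, ⟨T, ⟨hT, hTd⟩, rfl⟩, _, ⟨U, ⟨hU, hUe⟩, rfl⟩, rfl⟩
  refine ⟨T ∪ U, ⟨union_subset hT hU, (card_union_le T U).trans (add_le_add hTd hUe)⟩, ?_⟩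
  simp only [← Set.inter_indicator_one, Set.Ici_inter_Ici, sup_eq_union]

lemma const_mem [Semiring R] (S : Finset α) (d : ℕ) (c : R) :
    (fun _ ↦ c) ∈ setFunctionDegreeLE R S d := by
  convert (setFunctionDegreeLE R S d).smul_mem c
    (indicator_mem (empty_subset S) (Nat.zero_le d)) using 1
  ext X
  simp

lemma card_inter_mem [DecidableEq α] [Semiring R] {S B : Finset α} (hB : B ⊆ S) :
    (fun X ↦ (#(X ∩ B) : R)) ∈ setFunctionDegreeLE R S 1 := by
  have hsum : (fun X ↦ (#(X ∩ B) : R)) = ∑ b ∈ B, (Set.Ici {b}).indicator 1 := by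
    ext X
    simp [Set.indicator_apply, inter_comm X B]
  rw [hsum]
  exact Submodule.sum_mem _ fun b hb ↦
    indicator_mem (singleton_subset_iff.2 (hB hb)) (card_singleton b).le

lemma prod_card_inter_sub_mem [DecidableEq α] [CommRing R] {S B : Finset α} (hB : B ⊆ S)
    (L : Finset R) :
    (fun X ↦ ∏ l ∈ L, ((#(X ∩ B) : R) - l)) ∈ setFunctionDegreeLE R S #L := by
  classical
  induction L using Finset.induction_on with
  | empty => simpa using const_mem S 0 (1 : R)
  | insert a L ha ih =>
    simp only [prod_insert ha, card_insert_of_notMem ha, add_comm #L 1]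
    exact mul_mem (Submodule.sub_mem _ (card_inter_mem hB) (const_mem S 1 a)) ih

lemma card_le_of_linearIndependent [CommRing R] [Nontrivial R] [Fintype ι] {S : Finset α} {d : ℕ}
    {f : ι → Finset α → R} (hf : ∀ i, f i ∈ setFunctionDegreeLE R S d)
    (hli : LinearIndependent R f) : Fintype.card ι ≤ ∑ i ∈ range (d + 1), (#S).choose i := by
  classical
  let monomials : Finset (Finset α → R) :=
    ((range (d + 1)).biUnion fun i ↦ S.powersetCard i).image fun T ↦ (Set.Ici T).indicator 1
  have hspan : setFunctionDegreeLE R S d ≤ Submodule.span R monomials := by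
    refine Submodule.span_mono ?_
    rintro _ ⟨T, ⟨hT, hTd⟩, rfl⟩
    exact mem_image_of_mem _ (mem_biUnion.2
      ⟨#T, mem_range_succ_iff.2 hTd, mem_powersetCard.2 ⟨hT, rfl⟩⟩)
  calc Fintype.card ι ≤ #monomials := by
        simpa using linearIndependent_le_span' f hli monomials
          (Set.range_subset_iff.2 fun i ↦ hspan (hf i))
    _ ≤ #((range (d + 1)).biUnion fun i ↦ S.powersetCard i) := card_image_le
    _ ≤ ∑ i ∈ range (d + 1), #(S.powersetCard i) := card_biUnion_le
    _ = ∑ i ∈ range (d + 1), (#S).choose i := by simp only [card_powersetCard]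

end setFunctionDegreeLE

end SetFunction

section FranklWilson

lemma linearIndependent_of_eval_diagonal [Ring R] [IsDomain R] {f : ι → α → R} (x : ι → α)
    (hdiag : ∀ i, f i (x i) ≠ 0) (hoff : Pairwise fun i j ↦ f i (x j) = 0) :
    LinearIndependent R f := by
  classical
  have hcomp : LinearMap.funLeft R R x ∘ f = fun i ↦ Pi.single i (f i (x i)) := by
    ext i j
    obtain rfl | hij := eq_or_ne i j
    · simp [LinearMap.funLeft_apply]
    · simp [LinearMap.funLeft_apply, hoff hij, hij.symm]
  refine LinearIndependent.of_comp (LinearMap.funLeft R R x) ?_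
  rw [hcomp]
  exact Pi.linearIndependent_single_of_ne_zero hdiag

theorem card_le_sum_choose_of_card_inter_mem [DecidableEq α] [CommRing R] [IsDomain R]
    {L : Finset R} {S : Finset α} {I : Finset ι} {A : ι → Finset α} (hsub : ∀ i ∈ I, A i ⊆ S)
    (hcard : ∀ i ∈ I, (#(A i) : R) ∉ L)
    (hinter : (I : Set ι).Pairwise fun i j ↦ (#(A i ∩ A j) : R) ∈ L) :
    #I ≤ ∑ i ∈ range (#L + 1), (#S).choose i := by
  let f : I → Finset α → R := fun i X ↦ ∏ l ∈ L, ((#(X ∩ A i) : R) - l)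
  have hdiag (i : I) : f i (A i) ≠ 0 := by
    refine prod_ne_zero_iff.2 fun l hl hzero ↦ hcard i i.2 ?_
    rw [inter_self, sub_eq_zero] at hzero
    exact hzero ▸ hl
  have hoff : Pairwise fun i j : I ↦ f i (A j) = 0 := fun i j hij ↦
    prod_eq_zero (hinter j.2 i.2 (Subtype.coe_injective.ne hij.symm)) (sub_self _)
  rw [← Fintype.card_coe I]
  exact setFunctionDegreeLE.card_le_of_linearIndependent
    (fun i ↦ setFunctionDegreeLE.prod_card_inter_sub_mem (hsub i i.2) L)
    (linearIndependent_of_eval_diagonal (fun i : I ↦ A i) hdiag hoff)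

end FranklWilson

variable [DecidableEq α]

/-- The family `A`, indexed by `I` and restricted to the ground set `S`, is a `k`-wise reverse
odd-town with intersection sizes `L`: fewer than `k` members meet in `0` points of `S`, and `k`
members in a number of points belonging to `L`, all counted in `R` (for `R = ZMod p`, modulo `p`).
Allowing members not contained in `S` lets the ground set shrink while the family stays put. -/
structure IsReverseOddTown_s7 [AddMonoidWithOne R] (L : Set R) (k : ℕ) (A : ι → Finset α)
    (S : Finset α) (I : Finset ι) : Prop where
  card_eq_zero : ∀ J ⊆ I, J.Nonempty → #J < k → (#{x ∈ S | ∀ i ∈ J, x ∈ A i} : R) = 0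
  card_mem : ∀ J ⊆ I, #J = k → (#{x ∈ S | ∀ i ∈ J, x ∈ A i} : R) ∈ L

namespace IsReverseOddTown_s7

variable {k t : ℕ} {A : ι → Finset α} {S : Finset α} {I : Finset ι}

lemma of_strictMono [AddMonoidWithOne R] [LinearOrder ι] [Fintype α] {L : Set R}
    (hlow : ∀ j, 0 < j → j < k → ∀ r : Fin j → ι, StrictMono r →
      (#(univ.inf fun t ↦ A (r t)) : R) = 0)
    (htop : ∀ r : Fin k → ι, StrictMono r → (#(univ.inf fun t ↦ A (r t)) : R) ∈ L) :
    IsReverseOddTown_s7 L k A univ I := by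
  have hinf {J : Finset ι} {j : ℕ} (hJ : #J = j) :
      ({x | ∀ i ∈ J, x ∈ A i} : Finset α) = univ.inf fun t ↦ A (J.orderEmbOfFin hJ t) := by
    ext x
    simp only [mem_filter_univ, mem_inf, mem_univ, true_imp_iff, ← mem_coe (s := J),
      ← range_orderEmbOfFin J hJ, Set.forall_mem_range]
  refine ⟨fun J _ hne hJ ↦ ?_, fun J _ hJ ↦ ?_⟩
  · rw [hinf (J := J) rfl]
    exact hlow #J hne.card_pos hJ _ (J.orderEmbOfFin rfl).strictMono
  · rw [hinf hJ]
    exact htop _ (J.orderEmbOfFin hJ).strictMono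

section Restriction

variable [AddGroupWithOne R] {L : Set R}

lemma inter_erase [DecidableEq ι] (h : IsReverseOddTown_s7 L (k + 1) A S I) {a : ι} (ha : a ∈ I) :
    IsReverseOddTown_s7 L k A (S ∩ A a) (I.erase a) := by
  have hinsert (J : Finset ι) :
      {x ∈ S ∩ A a | ∀ i ∈ J, x ∈ A i} = {x ∈ S | ∀ i ∈ insert a J, x ∈ A i} := by
    ext x
    simp only [mem_filter, mem_inter, forall_mem_insert, and_assoc]
  have hsub {J : Finset ι} (hJ : J ⊆ I.erase a) : insert a J ⊆ I :=
    insert_subset ha (hJ.trans (erase_subset a I))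
  have hcard {J : Finset ι} (hJ : J ⊆ I.erase a) : #(insert a J) = #J + 1 :=
    card_insert_of_notMem fun haJ ↦ notMem_erase a I (hJ haJ)
  refine ⟨fun J hJ _ hJk ↦ ?_, fun J hJ hJk ↦ ?_⟩
  · rw [hinsert]
    exact h.card_eq_zero _ (hsub hJ) (insert_nonempty a J) (by rw [hcard hJ]; omega)
  · rw [hinsert]
    exact h.card_mem _ (hsub hJ) (by rw [hcard hJ, hJk])

lemma sdiff_erase [DecidableEq ι] (hk : 0 < k) (hsym : ∀ x ∈ L, -x ∈ L)
    (h : IsReverseOddTown_s7 L (k + 1) A S I) {a : ι} (ha : a ∈ I) :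
    IsReverseOddTown_s7 L k A (S \ A a) (I.erase a) := by
  have hneg {J : Finset ι} (hJ : J ⊆ I.erase a) (hne : J.Nonempty) (hJk : #J < k + 1) :
      (#{x ∈ S \ A a | ∀ i ∈ J, x ∈ A i} : R) = -#{x ∈ S ∩ A a | ∀ i ∈ J, x ∈ A i} := by
    rw [eq_neg_iff_add_eq_zero, ← Nat.cast_add,
      ← card_union_of_disjoint (disjoint_filter_filter (disjoint_sdiff_inter S (A a))),
      ← filter_union, sdiff_union_inter]
    exact h.card_eq_zero J (hJ.trans (erase_subset a I)) hne hJk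
  have hinter := h.inter_erase ha
  refine ⟨fun J hJ hne hJk ↦ ?_, fun J hJ hJk ↦ ?_⟩
  · rw [hneg hJ hne (by omega), hinter.card_eq_zero J hJ hne hJk, neg_zero]
  · rw [hneg hJ (card_pos.1 (by omega)) (by omega)]
    exact hsym _ (hinter.card_mem J hJ hJk)

theorem exists_restriction (hk : 0 < k) (hsym : ∀ x ∈ L, -x ∈ L)
    (h : IsReverseOddTown_s7 L (k + t) A S I) (ht : t ≤ #I) :
    ∃ S' I', #S' * 2 ^ t ≤ #S ∧ #I' + t = #I ∧ IsReverseOddTown_s7 L k A S' I' := by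
  classical
  induction t generalizing S I with
  | zero => exact ⟨S, I, by simp, rfl, h⟩
  | succ t ih =>
    obtain ⟨a, ha⟩ : I.Nonempty := card_pos.1 (by omega)
    obtain ⟨S₁, hS₁, h₁⟩ : ∃ S₁, #S₁ * 2 ≤ #S ∧ IsReverseOddTown_s7 L (k + t) A S₁ (I.erase a) := by
      have hsplit := card_sdiff_add_card_inter S (A a)
      rcases le_total #(S ∩ A a) #(S \ A a) with hle | hle
      · exact ⟨S ∩ A a, by omega, h.inter_erase ha⟩
      · exact ⟨S \ A a, by omega, h.sdiff_erase (Nat.add_pos_left hk t) hsym ha⟩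
    have hI := card_erase_add_one ha
    obtain ⟨S', I', hS', hI', h'⟩ := ih h₁ (by omega)
    exact ⟨S', I', by rw [pow_succ, ← mul_assoc]; omega, by omega, h'⟩

theorem two_pow_le_card (h0 : 0 ∉ L) (hsym : ∀ x ∈ L, -x ∈ L)
    (h : IsReverseOddTown_s7 L (t + 1) A S I) (ht : t < #I) : 2 ^ t ≤ #S := by
  rw [add_comm] at h
  obtain ⟨S', I', hS', hI', h'⟩ := h.exists_restriction one_pos hsym ht.le
  obtain ⟨i, hi⟩ : I'.Nonempty := card_pos.1 (by omega)
  have hne : S'.Nonempty := by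
    rw [nonempty_iff_ne_empty]
    rintro rfl
    exact h0 (by simpa using h'.card_mem {i} (singleton_subset_iff.2 hi) (card_singleton i))
  exact (Nat.le_mul_of_pos_left _ hne.card_pos).trans hS'

lemma card_div_two_pow_succ_le (h0 : 0 ∉ L) (hsym : ∀ x ∈ L, -x ∈ L)
    (h : IsReverseOddTown_s7 L (t + 3) A S I) (ht : t + 3 ≤ #I) :
    #S / 2 ^ (t + 1) ≤ #S / 2 ^ t - 2 := by
  have hfour : 4 ≤ #S / 2 ^ t := by
    rw [Nat.le_div_iff_mul_le (by positivity)]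
    calc 4 * 2 ^ t = 2 ^ (t + 2) := by ring
      _ ≤ #S := h.two_pow_le_card h0 hsym ht
  rw [pow_succ, ← Nat.div_div_eq_div_mul]
  omega

end Restriction

theorem card_le_sum_choose [CommRing R] [IsDomain R] {L : Finset R} (h0 : 0 ∉ L)
    (h : IsReverseOddTown_s7 (L : Set R) 2 A S I) : #I ≤ ∑ i ∈ range (#L + 1), (#S).choose i := by
  classical
  refine card_le_sum_choose_of_card_inter_mem (A := fun i ↦ S ∩ A i)
    (fun i _ ↦ inter_subset_left) (fun i hi ↦ ?_) fun i hi j hj hij ↦ ?_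
  · have hzero : (#(S ∩ A i) : R) = 0 := by
      simpa [filter_mem_eq_inter] using h.card_eq_zero {i} (by simpa using hi)
    rwa [hzero]
  · simpa [filter_and, filter_mem_eq_inter] using
      h.card_mem {i, j} (insert_subset hi (singleton_subset_iff.2 hj)) (card_pair hij)

end IsReverseOddTown_s7

theorem generalized_reverse_odd_town_not_dvd_general [CommRing R] [IsDomain R] {L : Finset R}
    (h0 : 0 ∉ L) (hsym : ∀ x ∈ L, -x ∈ L) {t : ℕ} {A : ι → Finset α} {S : Finset α}
    {I : Finset ι} (h : IsReverseOddTown_s7 (L : Set R) (t + 2) A S I) :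
    #I ≤ ∑ i ∈ range (#L + 1), (#S / 2 ^ t).choose i + t := by
  obtain hI | hI := le_total #I t
  · exact hI.trans (Nat.le_add_left _ _)
  rw [add_comm] at h
  obtain ⟨S', I', hS', hI', h'⟩ := h.exists_restriction two_pos hsym hI
  rw [← hI', add_le_add_iff_right]
  refine (h'.card_le_sum_choose h0).trans (sum_le_sum fun i _ ↦ Nat.choose_le_choose i ?_)
  rwa [Nat.le_div_iff_mul_le (by positivity)]

/-- Generalized reverse odd-town theorem, case p ∤ n. -/
theorem generalized_reverse_odd_town_not_dvd (p : ℕ) (hp : p.Prime) (k : ℕ) (hk : 2 < k)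
    (L : Finset (ZMod p)) (h0 : (0 : ZMod p) ∉ L) (hsym : ∀ x : ZMod p, x ∈ L ↔ -x ∈ L)
    (n : ℕ) (hpn : ¬ p ∣ n)
    (m : ℕ) (hm : k ≤ m) (A : Fin m → Finset (Fin n)) (hA : Function.Injective A)
    (hlow : ∀ j : ℕ, 1 ≤ j → j ≤ k - 1 → ∀ r : Fin j → Fin m, StrictMono r →
      ((Finset.univ.inf fun t : Fin j => A (r t)).card : ZMod p) = 0)
    (htop : ∀ r : Fin k → Fin m, StrictMono r →
      ((Finset.univ.inf fun t : Fin k => A (r t)).card : ZMod p) ∈ L) :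
    m ≤ ∑ i ∈ Finset.range (L.card + 1), (n / 2 ^ (k - 3) - 2).choose i + (k - 2) := by
  have : Fact p.Prime := ⟨hp⟩
  obtain ⟨t, rfl⟩ : ∃ t, k = t + 3 := ⟨k - 3, by omega⟩
  have h : IsReverseOddTown_s7 (L : Set (ZMod p)) (t + 3) A univ univ :=
    .of_strictMono (fun j hj hjk ↦ hlow j hj (by omega)) htop
  have hdiv := h.card_div_two_pow_succ_le h0 (fun x ↦ (hsym x).1) (by simpa using hm)
  have hbound := generalized_reverse_odd_town_not_dvd_general h0 (fun x ↦ (hsym x).1) h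
  simp only [card_univ, Fintype.card_fin] at hdiv hbound
  exact hbound.trans (Nat.add_le_add_right
    (sum_le_sum fun i _ ↦ Nat.choose_le_choose i hdiv) _)
end
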